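/- arXiv:2510.01422 — 2 statements merged into one kernel-verified Lean document; each statement's English description precedes it below -/
import Mathlib

section
/- Comparison of the infranorm with the conjugate (norm −1 case): for every nonzero x ∈ ℤ[θ], θ⁻¹·|x'| ≤ |x|_θ ≤ θ·|x'|, where x' denotes the Galois conjugate of x and |x'| its usual absolute value. -/
/-!
Write `θ = theta a`. The value of a digit string `(c₀, c₁, …)` with digits in `[0, a]` at the
conjugate `θ' = -θ⁻¹` lies in `[-1, θ]` (`alternating_bounds`, by Horner's scheme together with
`a + θ⁻¹ = θ`). If moreover `c₀ ≠ 0`, then admissibility forces `c₁ ≤ a - 1`, and one more Horner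
step improves the lower bound to `θ⁻¹` (`alternating_lower`). Hence, if `m` is the lowest index with
a nonzero digit in an admissible expansion of `±x`, then `θ^(-m) θ⁻¹ ≤ |x'| ≤ θ^(-m) θ`.

Any `k` with `x / θ^k ∈ ℤ_θ` lies below such an index `m`, and `x / θ^m ∈ ℤ_θ` as well
(`exists_lowest`). The upper bound on `|x'|` therefore bounds these exponents from above, and the
maximal one, `v(x)`, coincides with its own `m`; this is the claim. Uniqueness of expansions is
not needed.

It remains to see that some `k` exists, that is, every positive element of `ℤ[θ]` has a
finite admissible expansion. After multiplication by a large power of `θ` such an element becomes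
`p + qθ` with `p, q ≥ 0` (`exists_nonneg_coords`), hence a finite sum of powers of `θ`. Such a sum
is normalised by induction on the digit sum (`exists_normal_form`), using
`aθ^i + θ^(i-1) = θ^(i+1)`, which lowers the digit sum, and
`(a+1)θ^k = θ^(k+1) + (a-1)θ^(k-1) + θ^(k-2)`, which preserves it and moves the only bad digit
down, eventually below the support (`normalise_add_single`).
-/

noncomputable section

/-- The real quadratic unit `θ = (a + √(a²+4))/2`, the positive root of `θ² = aθ + 1`
(the norm `N(θ) = −1` case). -/
def theta (a : ℕ) : ℝ := ((a : ℝ) + Real.sqrt ((a : ℝ) ^ 2 + 4)) / 2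

/-- The Galois conjugate `θ' = −θ⁻¹`. -/
def thetaConj (a : ℕ) : ℝ := -(theta a)⁻¹

/-- Membership in the ring `ℤ[θ]`. -/
def inOK (a : ℕ) (x : ℝ) : Prop := ∃ p q : ℤ, x = (p : ℝ) + (q : ℝ) * theta a

/-- A finite integer sequence, supported in `[m, M]`, is admissible (norm `−1` case) if all its
entries lie in `{0, …, a}` and an entry equal to `a` is always followed (below) by a `0`. -/
def AdmissibleOn (a : ℕ) (m M : ℤ) (b : ℤ → ℤ) : Prop :=
  (∀ i, b i ≠ 0 → m ≤ i ∧ i ≤ M) ∧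
  (∀ i, 0 ≤ b i ∧ b i ≤ (a : ℤ)) ∧
  (∀ i, b i = (a : ℤ) → b (i - 1) = 0)

/-- The set `ℤ_θ` of θ-integers: signed sums `± Σ_{i=0}^{M} b_i θ^i` with `(b_i)` admissible. -/
def Ztheta (a : ℕ) : Set ℝ :=
  { x | ∃ (ε : ℤ) (M : ℤ) (b : ℤ → ℤ), (ε = 1 ∨ ε = -1) ∧ 0 ≤ M ∧
      AdmissibleOn a 0 M b ∧
      x = (ε : ℝ) * ∑ i ∈ Finset.Icc (0 : ℤ) M, (b i : ℝ) * theta a ^ i }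

/-- `v(x) = max { k : ℤ | x / θ^k ∈ ℤ_θ }` (as a supremum in `ℤ`). -/
def vval (a : ℕ) (x : ℝ) : ℤ := sSup { k : ℤ | x / theta a ^ k ∈ Ztheta a }

/-- The θ-adic infranorm `|x|_θ = θ^{−v(x)}`, with `|0|_θ = 0`. -/
def thNorm (a : ℕ) (x : ℝ) : ℝ := if x = 0 then 0 else theta a ^ (-vval a x)

/-- A sequence in `ℝ` is `|·|_θ`-Cauchy. -/
def IsThCauchy (a : ℕ) (x : ℕ → ℝ) : Prop :=
  ∀ ε : ℝ, 0 < ε → ∃ N : ℕ, ∀ i j : ℕ, N ≤ i → N ≤ j → thNorm a (x i - x j) < ε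

/-! ### The unit `θ` and its conjugate -/

lemma theta_sq (a : ℕ) : theta a ^ 2 = a * theta a + 1 := by
  unfold theta
  have h := Real.sq_sqrt (show (0 : ℝ) ≤ (a : ℝ) ^ 2 + 4 by positivity)
  linear_combination h / 4

lemma one_lt_theta {a : ℕ} (ha : 1 ≤ a) : 1 < theta a := by
  unfold theta
  have h : (2 : ℝ) ≤ Real.sqrt ((a : ℝ) ^ 2 + 4) := by
    apply Real.le_sqrt_of_sq_le
    nlinarith [sq_nonneg (a : ℝ)]
  have h2 : (1 : ℝ) ≤ a := by exact_mod_cast ha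
  linarith

lemma theta_pos {a : ℕ} (ha : 1 ≤ a) : 0 < theta a := by
  linarith [one_lt_theta ha]

lemma theta_eq {a : ℕ} (ha : 1 ≤ a) : theta a = a + (theta a)⁻¹ := by
  have h := theta_pos ha
  have h2 := theta_sq a
  field_simp
  linarith

lemma irrational_theta {a : ℕ} (ha : 1 ≤ a) : Irrational (theta a) := by
  have hns : ¬ IsSquare (a ^ 2 + 4) := by
    rintro ⟨m, hm⟩
    -- `m > a` and `m` has the parity of `a`, so `m ≥ a + 2` and `m ^ 2 > a ^ 2 + 4`.
    have h1 : a < m := by nlinarith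
    have h2 : m ≠ a + 1 := by
      rintro rfl
      have : 2 * a = 3 := by nlinarith
      omega
    have h3 : a + 2 ≤ m := by omega
    nlinarith
  have h := irrational_sqrt_natCast_iff.mpr hns
  push_cast at h
  have h2 := (h.natCast_add a).div_natCast (m := 2) (by norm_num)
  simpa [theta] using h2

/-- The ring of pairs `(x, x')` with `x ∈ ℤ[θ]` and `x'` its Galois conjugate. -/
def conjPairs (a : ℕ) (ha : 1 ≤ a) : Subring (ℝ × ℝ) where
  carrier := {z | ∃ p q : ℤ, z.1 = p + q * theta a ∧ z.2 = p + q * thetaConj a}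
  mul_mem' := by
    rintro ⟨x, x'⟩ ⟨y, y'⟩ ⟨p, q, hx, hx'⟩ ⟨r, s, hy, hy'⟩
    have h1 := theta_sq a
    have h2 : thetaConj a ^ 2 = a * thetaConj a + 1 := by
      have h := theta_pos ha
      unfold thetaConj
      field_simp
      linear_combination -h1
    refine ⟨p * r + q * s, p * s + q * r + a * q * s, ?_, ?_⟩
    · simp only [Prod.fst_mul] at *
      push_cast
      rw [hx, hy]
      linear_combination (q * s : ℝ) * h1
    · simp only [Prod.snd_mul] at *
      push_cast
      rw [hx', hy']
      linear_combination (q * s : ℝ) * h2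
  one_mem' := ⟨1, 0, by simp, by simp⟩
  add_mem' := by
    rintro ⟨x, x'⟩ ⟨y, y'⟩ ⟨p, q, hx, hx'⟩ ⟨r, s, hy, hy'⟩
    refine ⟨p + r, q + s, ?_, ?_⟩
    · simp only [Prod.fst_add] at *
      push_cast
      rw [hx, hy]
      ring
    · simp only [Prod.snd_add] at *
      push_cast
      rw [hx', hy']
      ring
  zero_mem' := ⟨0, 0, by simp, by simp⟩
  neg_mem' := by
    rintro ⟨x, x'⟩ ⟨p, q, hx, hx'⟩
    refine ⟨-p, -q, ?_, ?_⟩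
    · simp only [Prod.fst_neg] at *
      push_cast
      rw [hx]
      ring
    · simp only [Prod.snd_neg] at *
      push_cast
      rw [hx']
      ring

lemma mem_conjPairs {a : ℕ} {ha : 1 ≤ a} {z : ℝ × ℝ} :
    z ∈ conjPairs a ha ↔ ∃ p q : ℤ, z.1 = p + q * theta a ∧ z.2 = p + q * thetaConj a :=
  Iff.rfl

lemma conj_unique {a : ℕ} (ha : 1 ≤ a) {x y y' : ℝ} (h : (x, y) ∈ conjPairs a ha)
    (h' : (x, y') ∈ conjPairs a ha) : y = y' := by
  obtain ⟨p, q, hx, hy⟩ := mem_conjPairs.1 h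
  obtain ⟨r, s, hx', hy'⟩ := mem_conjPairs.1 h'
  simp only at hx hy hx' hy'
  have hqs : q = s := by
    by_contra hne
    have hirr := ((irrational_theta ha).intCast_mul (sub_ne_zero.2 hne)).ne_int (r - p)
    apply hirr
    push_cast
    linarith
  subst hqs
  have hpr : (p : ℝ) = r := by linarith
  rw [hy, hy', hpr]

lemma zpow_mem_conjPairs {a : ℕ} (ha : 1 ≤ a) (i : ℤ) :
    (theta a ^ i, thetaConj a ^ i) ∈ conjPairs a ha := by
  have h1 : (theta a, thetaConj a) ∈ conjPairs a ha := ⟨0, 1, by simp, by simp⟩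
  have h2 : ((theta a)⁻¹, (thetaConj a)⁻¹) ∈ conjPairs a ha := by
    refine ⟨-a, 1, ?_, ?_⟩
    · push_cast
      linarith [theta_eq ha]
    · push_cast
      simp only [thetaConj, inv_neg, inv_inv]
      linarith [theta_eq ha]
  obtain ⟨n, rfl | rfl⟩ := i.eq_nat_or_neg
  · simpa using pow_mem h1 n
  · simpa using pow_mem h2 n

/-! ### Digit strings evaluated at the conjugate -/

lemma alternating_bounds {a : ℕ} (ha : 1 ≤ a) (N : ℕ) (c : ℕ → ℤ)
    (hc : ∀ i, 0 ≤ c i ∧ c i ≤ a) :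
    -1 ≤ ∑ l ∈ Finset.range N, (c l : ℝ) * thetaConj a ^ l ∧
      ∑ l ∈ Finset.range N, (c l : ℝ) * thetaConj a ^ l ≤ theta a := by
  induction N generalizing c with
  | zero => simp [(theta_pos ha).le]
  | succ N ih =>
    have hstep : ∑ l ∈ Finset.range (N + 1), (c l : ℝ) * thetaConj a ^ l
        = c 0 - (theta a)⁻¹ * ∑ l ∈ Finset.range N, (c (l + 1) : ℝ) * thetaConj a ^ l := by
      rw [Finset.sum_range_succ', Finset.mul_sum, sub_eq_add_neg, ← Finset.sum_neg_distrib,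
        add_comm]
      congr 1
      · simp
      · refine Finset.sum_congr rfl fun l _ => ?_
        rw [pow_succ]
        nth_rewrite 2 [thetaConj]
        ring
    rw [hstep]
    obtain ⟨h1, h2⟩ := ih (fun l => c (l + 1)) fun i => hc (i + 1)
    have hpos := inv_pos.2 (theta_pos ha)
    have e := mul_inv_cancel₀ (theta_pos ha).ne'
    have e2 := theta_eq ha
    have h3 : (0 : ℝ) ≤ c 0 := by exact_mod_cast (hc 0).1
    have h4 : (c 0 : ℝ) ≤ a := by exact_mod_cast (hc 0).2
    have h5 := mul_le_mul_of_nonneg_left h1 hpos.le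
    have h6 := mul_le_mul_of_nonneg_left h2 hpos.le
    constructor <;> linarith

lemma alternating_lower {a : ℕ} (ha : 1 ≤ a) (N : ℕ) (c : ℕ → ℤ)
    (hc : ∀ i, 0 ≤ c i ∧ c i ≤ a) (h0 : 1 ≤ c 0) (h1 : c 1 ≤ a - 1) :
    (theta a)⁻¹ ≤ ∑ l ∈ Finset.range (N + 1), (c l : ℝ) * thetaConj a ^ l := by
  have hpos := inv_pos.2 (theta_pos ha)
  have e := mul_inv_cancel₀ (theta_pos ha).ne'
  have e2 := theta_eq ha
  have hlt : (theta a)⁻¹ ≤ 1 := inv_le_one_of_one_le₀ (one_lt_theta ha).le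
  have h0' : (1 : ℝ) ≤ c 0 := by exact_mod_cast h0
  have h1' : (c 1 : ℝ) ≤ a - 1 := by exact_mod_cast h1
  rcases N with _ | N
  · simp only [zero_add, Finset.sum_range_one, pow_zero, mul_one]
    linarith
  · have hstep : ∑ l ∈ Finset.range (N + 1 + 1), (c l : ℝ) * thetaConj a ^ l
        = c 0 - (theta a)⁻¹ * (c 1 - (theta a)⁻¹ *
          ∑ l ∈ Finset.range N, (c (l + 2) : ℝ) * thetaConj a ^ l) := by
      rw [Finset.sum_range_succ', Finset.sum_range_succ']
      have : ∑ l ∈ Finset.range N, (c (l + 1 + 1) : ℝ) * thetaConj a ^ (l + 1 + 1)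
          = (theta a)⁻¹ * (theta a)⁻¹ *
            ∑ l ∈ Finset.range N, (c (l + 2) : ℝ) * thetaConj a ^ l := by
        rw [Finset.mul_sum]
        refine Finset.sum_congr rfl fun l _ => ?_
        have hs : thetaConj a ^ 2 = (theta a)⁻¹ * (theta a)⁻¹ := by
          simp [thetaConj, sq]
        rw [← hs]
        ring
      rw [this]
      simp [thetaConj]
      ring
    rw [hstep]
    have h2 := (alternating_bounds ha N (fun l => c (l + 2)) fun i => hc (i + 2)).1
    have h3 := mul_le_mul_of_nonneg_left h2 hpos.le
    -- The inner Horner value is at most `(a - 1) + θ⁻¹ = θ - 1`.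
    have h4 : (c 1 : ℝ) - (theta a)⁻¹ *
        ∑ l ∈ Finset.range N, (c (l + 2) : ℝ) * thetaConj a ^ l ≤ theta a - 1 := by
      linarith
    have h5 := mul_le_mul_of_nonneg_left h4 hpos.le
    linarith

/-! ### The lowest nonzero digit -/

lemma sum_Icc_eq_sum_range (g : ℤ → ℝ) (j M : ℤ) :
    ∑ i ∈ Finset.Icc j M, g i = ∑ l ∈ Finset.range (M + 1 - j).toNat, g (l + j) := by
  refine Finset.sum_nbij' (fun i => (i - j).toNat) (fun l => (l : ℤ) + j) ?_ ?_ ?_ ?_ ?_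
  · intro i hi
    simp only [Finset.mem_Icc, Finset.mem_range] at *
    omega
  · intro i hi
    simp only [Finset.mem_Icc, Finset.mem_range] at *
    omega
  · intro i hi
    simp only [Finset.mem_Icc] at *
    omega
  · intro i hi
    simp
  · intro i hi
    simp only [Finset.mem_Icc] at hi
    congr 1
    omega

/-- Every exponent `k` with `x / θ^k ∈ ℤ_θ` lies below an exponent `m` with `x / θ^m ∈ ℤ_θ` for which
the expansion of `x / θ^m` has a nonzero digit at index `0`; for such `m` the absolute value of the
conjugate is comparable to `θ^(-m)`. -/
lemma exists_lowest {a : ℕ} (ha : 1 ≤ a) {x x' : ℝ} (hx : x ≠ 0)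
    (hxx : (x, x') ∈ conjPairs a ha) {k : ℤ} (hk : x / theta a ^ k ∈ Ztheta a) :
    ∃ m, k ≤ m ∧ x / theta a ^ m ∈ Ztheta a ∧
      theta a ^ (-m) * (theta a)⁻¹ ≤ |x'| ∧ |x'| ≤ theta a ^ (-m) * theta a := by
  obtain ⟨ε, M, b, hε, hM, ⟨hsupp, hdig, hadm⟩, hsum⟩ := hk
  have hθ := theta_pos ha
  have hex : ∃ j, b j ≠ 0 := by
    by_contra! hall
    simp [hall, hx, (zpow_pos hθ k).ne'] at hsum
  -- the least index `j` with `b j ≠ 0`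
  obtain ⟨j, hj, hjmin⟩ : ∃ j, b j ≠ 0 ∧ ∀ i, b i ≠ 0 → j ≤ i :=
    Int.exists_least_of_bdd ⟨0, fun z hz => (hsupp z hz).1⟩ hex
  obtain ⟨hj0, hjM⟩ := hsupp j hj
  have hsumj : ∑ i ∈ Finset.Icc (0 : ℤ) M, (b i : ℝ) * theta a ^ i
      = theta a ^ j * ∑ l ∈ Finset.range (M + 1 - j).toNat, (b (l + j) : ℝ) * theta a ^ l := by
    have h1 : ∑ i ∈ Finset.Icc j M, (b i : ℝ) * theta a ^ i
        = ∑ i ∈ Finset.Icc (0 : ℤ) M, (b i : ℝ) * theta a ^ i := by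
      apply Finset.sum_subset (Finset.Icc_subset_Icc_left hj0)
      intro i hi hi'
      have : b i = 0 := by
        by_contra hb
        exact hi' (Finset.mem_Icc.2 ⟨hjmin i hb, (Finset.mem_Icc.1 hi).2⟩)
      simp [this]
    rw [← h1, sum_Icc_eq_sum_range, Finset.mul_sum]
    refine Finset.sum_congr rfl fun l _ => ?_
    rw [zpow_add₀ hθ.ne', zpow_natCast]
    ring
  have hxval : x = theta a ^ (k + j) *
      (ε * ∑ l ∈ Finset.range (M + 1 - j).toNat, (b (l + j) : ℝ) * theta a ^ l) := by
    rw [hsumj, div_eq_iff (zpow_pos hθ k).ne'] at hsum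
    rw [hsum, zpow_add₀ hθ.ne']
    ring
  have hx'val : x' = thetaConj a ^ (k + j) *
      (ε * ∑ l ∈ Finset.range (M + 1 - j).toNat, (b (l + j) : ℝ) * thetaConj a ^ l) := by
    refine conj_unique ha hxx ?_
    have hmem : (theta a ^ (k + j), thetaConj a ^ (k + j)) * ((ε : ℝ × ℝ) *
        ∑ l ∈ Finset.range (M + 1 - j).toNat,
          (b (l + j) : ℝ × ℝ) * (theta a, thetaConj a) ^ l) ∈ conjPairs a ha := by
      refine mul_mem (zpow_mem_conjPairs ha _) (mul_mem (intCast_mem _ _) (sum_mem fun l _ =>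
        mul_mem (intCast_mem _ _) (pow_mem ?_ l)))
      exact ⟨0, 1, by simp, by simp⟩
    convert hmem using 1
    ext
    · simp [hxval, Prod.fst_sum]
    · simp [Prod.snd_sum]
  have hεabs : |(ε : ℝ)| = 1 := by rcases hε with rfl | rfl <;> simp
  have hcabs : |thetaConj a ^ (k + j)| = theta a ^ (-(k + j)) := by
    rw [abs_zpow, thetaConj, abs_neg, abs_of_pos (inv_pos.2 hθ), inv_zpow, zpow_neg]
  obtain ⟨N, hN⟩ : ∃ N, (M + 1 - j).toNat = N + 1 := ⟨(M - j).toNat, by omega⟩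
  have hup := (alternating_bounds ha (N + 1) (fun l => b (l + j)) fun i => hdig _).2
  have hlow := alternating_lower ha N (fun l => b (l + j)) (fun i => hdig _)
    (by have := (hdig j).1; simp; omega)
    (by
      -- a digit `a` at index `j + 1` would force `b j = 0`
      have h1 := (hdig (1 + j)).2
      have h2 : b (1 + j) ≠ a := fun h => hj (by simpa using hadm _ h)
      simp only [Nat.cast_one]
      omega)
  have habs : |x'| = theta a ^ (-(k + j)) *
      ∑ l ∈ Finset.range (N + 1), (b (l + j) : ℝ) * thetaConj a ^ l := by
    rw [hx'val, abs_mul, abs_mul, hεabs, hcabs, one_mul, hN, abs_of_nonneg]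
    exact (inv_pos.2 hθ).le.trans hlow
  have hzp := (zpow_pos hθ (-(k + j))).le
  refine ⟨k + j, by omega, ⟨ε, M - j, fun i => b (i + j), hε, by omega, ⟨?_, ?_, ?_⟩, ?_⟩, ?_, ?_⟩
  · intro i hi
    have h1 := hjmin _ hi
    have h2 := hsupp _ hi
    omega
  · exact fun i => hdig _
  · intro i hi
    have := hadm _ hi
    rwa [show i + j - 1 = i - 1 + j by ring] at this
  · rw [sum_Icc_eq_sum_range, show M - j + 1 - 0 = M + 1 - j by ring,
      div_eq_iff (zpow_pos hθ _).ne', hxval]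
    simp only [add_zero, zpow_natCast]
    ring
  · rw [habs]
    exact mul_le_mul_of_nonneg_left hlow hzp
  · rw [habs]
    exact mul_le_mul_of_nonneg_left hup hzp

/-! ### Normalisation of finite sums of powers of `θ` -/

/-- The value `Σ f_i θ^i` of a finitely supported digit string. -/
def digitVal (a : ℕ) : (ℤ →₀ ℕ) →+ ℝ :=
  Finsupp.liftAddHom fun i => (AddMonoidHom.mulRight (theta a ^ i)).comp (Nat.castAddMonoidHom ℝ)

lemma digitVal_single (a : ℕ) (i : ℤ) (n : ℕ) :
    digitVal a (Finsupp.single i n) = n * theta a ^ i := by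
  simp [digitVal]

lemma digitVal_apply (a : ℕ) (f : ℤ →₀ ℕ) :
    digitVal a f = f.sum fun i n => (n : ℝ) * theta a ^ i := by
  rfl

/-- Admissibility of a finitely supported string of natural numbers. -/
def IsAdm (a : ℕ) (f : ℤ →₀ ℕ) : Prop :=
  ∀ i, f i ≤ a ∧ (f i = a → f (i - 1) = 0)

/-- `f` has an admissible digit string of the same value and no larger digit sum. -/
def Normalises (a : ℕ) (f : ℤ →₀ ℕ) : Prop :=
  ∃ g, IsAdm a g ∧ g.degree ≤ f.degree ∧ digitVal a g = digitVal a f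

lemma digitVal_carry {a : ℕ} (ha : 1 ≤ a) (i : ℤ) :
    digitVal a (Finsupp.single i a + Finsupp.single (i - 1) 1)
      = digitVal a (Finsupp.single (i + 1) 1) := by
  have hθ := theta_pos ha
  simp only [map_add, digitVal_single, zpow_add₀ hθ.ne', zpow_sub₀ hθ.ne', zpow_one]
  have h := theta_eq ha
  rw [div_eq_mul_inv]
  push_cast
  linear_combination -(theta a ^ i) * h

lemma digitVal_split {a : ℕ} (ha : 1 ≤ a) (k : ℤ) :
    digitVal a (Finsupp.single k a + Finsupp.single k 1)
      = digitVal a (Finsupp.single (k + 1) 1 + Finsupp.single (k - 1) (a - 1)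
          + Finsupp.single (k - 2) 1) := by
  have h1 := digitVal_carry ha k
  have h2 := digitVal_carry ha (k - 1)
  rw [show k - 1 - 1 = k - 2 by ring, show k - 1 + 1 = k by ring] at h2
  have h3 : Finsupp.single (k - 1) a
      = Finsupp.single (k - 1) (a - 1) + (Finsupp.single (k - 1) 1 : ℤ →₀ ℕ) := by
    rw [← Finsupp.single_add, Nat.sub_add_cancel ha]
  rw [h3] at h2
  simp only [map_add] at *
  linarith

/-- If the carry `aθ^i + θ^(i-1) = θ^(i+1)` applies to `f`, it lowers the digit sum, so that `f`
normalises by induction. -/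
lemma normalises_of_carry {a : ℕ} (ha : 1 ≤ a) {f : ℤ →₀ ℕ}
    (ih : ∀ g : ℤ →₀ ℕ, g.degree < f.degree → Normalises a g)
    {i : ℤ} (h1 : a ≤ f i) (h2 : 1 ≤ f (i - 1)) : Normalises a f := by
  have hle : Finsupp.single i a + Finsupp.single (i - 1) 1 ≤ f := by
    intro l
    simp only [Finsupp.add_apply, Finsupp.single_apply]
    split_ifs <;> first | omega | (subst_vars; omega)
  obtain ⟨h, rfl⟩ := exists_add_of_le hle
  obtain ⟨g, hg, hd, hv⟩ := ih (Finsupp.single (i + 1) 1 + h)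
    (by simp only [map_add, Finsupp.degree_single]; omega)
  refine ⟨g, hg, ?_, ?_⟩
  · refine hd.trans ?_
    simp only [map_add, Finsupp.degree_single]
    omega
  · rw [hv, map_add, map_add, digitVal_carry ha]

/-- Adding one power `θ^k` to an admissible string. The auxiliary `N` measures how far `k` is above
the lower end of the support of `b`. -/
lemma normalise_add_single {a : ℕ} (ha : 1 ≤ a) (n N : ℕ)
    (ih : ∀ g : ℤ →₀ ℕ, g.degree < n → Normalises a g) (b : ℤ →₀ ℕ) (k : ℤ)
    (hb : IsAdm a b) (hdeg : b.degree + 1 ≤ n) (hN : ∀ i, i < k + 1 - N → b i = 0) :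
    Normalises a (b + Finsupp.single k 1) := by
  induction N generalizing b k with
  | zero =>
    have hbk : b k = 0 := hN k (by simp)
    by_cases hc : ∃ i, a ≤ (b + Finsupp.single k 1 : ℤ →₀ ℕ) i ∧
        1 ≤ (b + Finsupp.single k 1 : ℤ →₀ ℕ) (i - 1)
    · obtain ⟨i, h1, h2⟩ := hc
      refine normalises_of_carry ha (fun g hg => ih g (hg.trans_le ?_)) h1 h2
      simpa using hdeg
    · push Not at hc
      refine ⟨_, fun i => ⟨?_, fun h => ?_⟩, le_rfl, rfl⟩
      · have := (hb i).1
        simp only [Finsupp.add_apply, Finsupp.single_apply]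
        split_ifs with h
        · subst h
          omega
        · omega
      · have := hc i h.ge
        omega
  | succ N ihN =>
    by_cases hc : ∃ i, a ≤ (b + Finsupp.single k 1 : ℤ →₀ ℕ) i ∧
        1 ≤ (b + Finsupp.single k 1 : ℤ →₀ ℕ) (i - 1)
    · obtain ⟨i, h1, h2⟩ := hc
      refine normalises_of_carry ha (fun g hg => ih g (hg.trans_le ?_)) h1 h2
      simpa using hdeg
    push Not at hc
    by_cases hbk : b k = a
    · have hle : Finsupp.single k a ≤ b := by
        intro l
        simp only [Finsupp.single_apply]
        split_ifs with h
        · subst h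
          omega
        · omega
      obtain ⟨h, hh⟩ := exists_add_of_le hle
      have hval : ∀ i, b i = (if k = i then a else 0) + h i := by
        intro i
        rw [hh, Finsupp.add_apply, Finsupp.single_apply]
      have hk1 : b (k - 1) = 0 := (hb k).2 hbk
      have hk2 : b (k + 1) < a := by
        by_contra! hcon
        have := hc (k + 1) (by simp only [Finsupp.add_apply]; omega)
        simp at this
      set b' := Finsupp.single (k + 1) 1 + Finsupp.single (k - 1) (a - 1) + h with hb'
      have hb'val : ∀ i, b' i = (if k + 1 = i then 1 else 0)
          + (if k - 1 = i then a - 1 else 0) + h i := by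
        intro i
        simp only [hb', Finsupp.add_apply, Finsupp.single_apply]
      have hdeg' : b'.degree + 1 = b.degree + 1 := by
        rw [hb', hh]
        simp only [map_add, Finsupp.degree_single]
        omega
      have hv' : digitVal a (b' + Finsupp.single (k - 2) 1)
          = digitVal a (b + Finsupp.single k 1) := by
        have := digitVal_split ha k
        rw [hb', hh]
        simp only [map_add] at *
        linarith
      have hres : Normalises a (b' + Finsupp.single (k - 2) 1) := by
        by_cases hk3 : b (k + 2) = a
        · -- the new unit at `k + 1` allows a carry at `k + 2`
          refine normalises_of_carry ha (i := k + 2)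
            (fun g hg => ih g (hg.trans_le ?_)) ?_ ?_
          · simp only [map_add, Finsupp.degree_single]
            omega
          · rw [Finsupp.add_apply, hb'val]
            have := hval (k + 2)
            simp at this
            omega
          · rw [Finsupp.add_apply, hb'val]
            rw [if_pos (by ring)]
            omega
        · refine ihN b' (k - 2) ?_ (by omega) ?_
          · intro i
            have e0 := hval i
            have e1 := hval (i - 1)
            have f0 := hb i
            rw [hb'val, hb'val]
            clear_value b'
            by_cases c1 : i = k + 2
            · subst c1
              rw [show k + 2 - 1 = k + 1 by ring] at *
              grind
            by_cases c2 : i = k + 1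
            · subst c2
              rw [show k + 1 - 1 = k by ring] at *
              grind
            by_cases c3 : i = k
            · subst c3
              grind
            by_cases c4 : i = k - 1
            · subst c4
              rw [show k - 1 - 1 = k - 2 by ring] at *
              grind
            have g1 : ¬ k + 1 = i := by omega
            have g2 : ¬ k - 1 = i := by omega
            have g3 : ¬ k + 1 = i - 1 := by omega
            have g4 : ¬ k - 1 = i - 1 := by omega
            have g5 : ¬ k = i := by omega
            have g6 : ¬ k = i - 1 := by omega
            simp only [g1, g2, g3, g4, g5, g6, if_false] at *
            omega
          · intro i hi
            have := hN i (by push_cast; omega)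
            rw [hval] at this
            rw [hb'val, if_neg (by omega), if_neg (by omega)]
            omega
      obtain ⟨g, hg, hd, hv⟩ := hres
      refine ⟨g, hg, hd.trans ?_, hv.trans hv'⟩
      simp only [map_add, Finsupp.degree_single]
      omega
    · refine ⟨_, fun i => ⟨?_, fun h => ?_⟩, le_rfl, rfl⟩
      · have := (hb i).1
        simp only [Finsupp.add_apply, Finsupp.single_apply]
        split_ifs with h
        · subst h
          omega
        · omega
      · have := hc i h.ge
        omega

lemma exists_normal_form {a : ℕ} (ha : 1 ≤ a) (n : ℕ) (f : ℤ →₀ ℕ) (hf : f.degree = n) :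
    Normalises a f := by
  induction n using Nat.strong_induction_on generalizing f with
  | _ n ih =>
    by_cases h0 : f = 0
    · subst h0
      exact ⟨0, fun i => by simp, le_rfl, rfl⟩
    obtain ⟨k, hk⟩ := Finsupp.ne_iff.1 h0
    have hle : Finsupp.single k 1 ≤ f := by
      intro l
      simp only [Finsupp.single_apply]
      split_ifs with h
      · subst h
        simp at hk
        omega
      · omega
    obtain ⟨r, rfl⟩ := exists_add_of_le hle
    simp only [map_add, Finsupp.degree_single] at hf
    obtain ⟨b, hb, hd, hv⟩ := ih r.degree (by omega) r rfl
    obtain ⟨m, hm⟩ := b.support.bddBelow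
    obtain ⟨g, hg, hgd, hgv⟩ := normalise_add_single ha n (k + 1 - m).toNat
      (fun g hg => ih _ hg g rfl) b k hb (by omega) (by
        intro i hi
        by_contra hne
        have := hm (Finsupp.mem_support_iff.2 hne)
        omega)
    refine ⟨g, hg, hgd.trans ?_, ?_⟩
    · simp only [map_add, Finsupp.degree_single]
      omega
    · rw [hgv, map_add, map_add, hv, add_comm]

/-! ### Existence of admissible expansions -/

lemma exists_nonneg_coords {a : ℕ} (ha : 1 ≤ a) {x x' : ℝ} (hx : 0 < x)
    (hxx : (x, x') ∈ conjPairs a ha) :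
    ∃ n P Q : ℕ, x * theta a ^ n = P + Q * theta a := by
  have hθ := theta_pos ha
  have h1 := one_lt_theta ha
  obtain ⟨n, hn⟩ := pow_unbounded_of_one_lt (theta a ^ 2 * |x'| / x) h1
  rw [div_lt_iff₀ hx] at hn
  have hmem : (x * theta a ^ n, x' * thetaConj a ^ n) ∈ conjPairs a ha := by
    have := mul_mem hxx (zpow_mem_conjPairs ha n)
    simpa using this
  obtain ⟨P, Q, hP, hQ⟩ := mem_conjPairs.1 hmem
  simp only at hP hQ
  have hy : |x' * thetaConj a ^ n| ≤ |x'| := by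
    rw [abs_mul, abs_pow, thetaConj, abs_neg, abs_of_pos (inv_pos.2 hθ)]
    exact mul_le_of_le_one_right (abs_nonneg _)
      (pow_le_one₀ (inv_pos.2 hθ).le (inv_le_one_of_one_le₀ h1.le))
  set y := x * theta a ^ n
  set y' := x' * thetaConj a ^ n
  have hlt : theta a ^ 2 * |y'| < y := by
    calc theta a ^ 2 * |y'| ≤ theta a ^ 2 * |x'| := by gcongr
      _ < y := by simpa [y, mul_comm] using hn
  have hlt' : |y'| < y := by
    have h2 : 1 ≤ theta a ^ 2 := one_le_pow₀ h1.le
    nlinarith [abs_nonneg y']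
  have hinv := inv_pos.2 hθ
  have e := mul_inv_cancel₀ hθ.ne'
  rw [thetaConj] at hQ
  have hQpos : 0 < (Q : ℝ) := by
    have : 0 < (Q : ℝ) * (theta a + (theta a)⁻¹) := by
      have := le_abs_self y'
      linarith
    exact pos_of_mul_pos_left this (by positivity)
  have hPpos : 0 < (P : ℝ) := by
    have : 0 < (P : ℝ) * (theta a ^ 2 + 1) := by
      have h2 := neg_abs_le y'
      have h3 : (P : ℝ) * (theta a ^ 2 + 1) = y + theta a ^ 2 * y' := by
        rw [hP, hQ]
        linear_combination Q * theta a * e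
      rw [h3]
      nlinarith [sq_nonneg (theta a)]
    exact pos_of_mul_pos_left this (by positivity)
  have hQ0 : 0 < Q := by exact_mod_cast hQpos
  have hP0 : 0 < P := by exact_mod_cast hPpos
  lift P to ℕ using hP0.le
  lift Q to ℕ using hQ0.le
  exact ⟨n, P, Q, by simpa using hP⟩

lemma exists_exponent_of_pos {a : ℕ} (ha : 1 ≤ a) {x x' : ℝ} (hx : 0 < x)
    (hxx : (x, x') ∈ conjPairs a ha) :
    ∃ (k M : ℤ) (b : ℤ → ℤ), 0 ≤ M ∧ AdmissibleOn a 0 M b ∧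
      x / theta a ^ k = ∑ i ∈ Finset.Icc (0 : ℤ) M, (b i : ℝ) * theta a ^ i := by
  have hθ := theta_pos ha
  obtain ⟨n, P, Q, hPQ⟩ := exists_nonneg_coords ha hx hxx
  obtain ⟨g, hg, -, hv⟩ := exists_normal_form ha _
    (Finsupp.single 0 P + Finsupp.single 1 Q) rfl
  simp only [map_add, digitVal_single, zpow_zero, zpow_one, mul_one] at hv
  rw [← hPQ, digitVal_apply] at hv
  obtain ⟨m, hm⟩ := g.support.bddBelow
  obtain ⟨M, hM⟩ := g.support.bddAbove
  have hm' : ∀ i, g i ≠ 0 → m ≤ i := fun i hi => hm (Finsupp.mem_support_iff.2 hi)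
  have hM' : ∀ i, g i ≠ 0 → i ≤ M := fun i hi => hM (Finsupp.mem_support_iff.2 hi)
  refine ⟨m - n, max M m - m, fun i => g (i + m), by omega, ⟨?_, ?_, ?_⟩, ?_⟩
  · intro i hi
    have hi' : g (i + m) ≠ 0 := by simpa using hi
    have h1 := hm' _ hi'
    have h2 := hM' _ hi'
    omega
  · intro i
    have := (hg (i + m)).1
    simpa using this
  · intro i hi
    have := (hg (i + m)).2 (by simpa using hi)
    rw [show i + m - 1 = i - 1 + m by ring] at this
    simp only [this, Nat.cast_zero]
  · have hsum : x * theta a ^ n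
        = ∑ i ∈ Finset.Icc m (max M m), (g i : ℝ) * theta a ^ i := by
      rw [← hv]
      refine Finsupp.sum_of_support_subset _ ?_ _ (by simp)
      intro i hi
      exact Finset.mem_Icc.2 ⟨hm hi, (hM hi).trans (le_max_left _ _)⟩
    rw [sum_Icc_eq_sum_range] at hsum
    rw [sum_Icc_eq_sum_range, show max M m - m + 1 - 0 = max M m + 1 - m by ring,
      div_eq_iff (zpow_pos hθ _).ne', zpow_sub₀ hθ.ne', zpow_natCast, mul_div_assoc',
      eq_div_iff (pow_pos hθ n).ne', hsum, Finset.sum_mul]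
    refine Finset.sum_congr rfl fun l _ => ?_
    rw [zpow_add₀ hθ.ne']
    simp only [add_zero, Int.cast_natCast]
    ring

lemma exists_exponent {a : ℕ} (ha : 1 ≤ a) {x x' : ℝ} (hx : x ≠ 0)
    (hxx : (x, x') ∈ conjPairs a ha) : ∃ k : ℤ, x / theta a ^ k ∈ Ztheta a := by
  rcases hx.lt_or_gt with hneg | hpos
  · obtain ⟨k, M, b, hM, hb, hs⟩ := exists_exponent_of_pos ha (neg_pos.2 hneg) (neg_mem hxx)
    refine ⟨k, -1, M, b, Or.inr rfl, hM, hb, ?_⟩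
    rw [← hs]
    push_cast
    ring
  · obtain ⟨k, M, b, hM, hb, hs⟩ := exists_exponent_of_pos ha hpos hxx
    exact ⟨k, 1, M, b, Or.inl rfl, hM, hb, by rw [← hs]; simp⟩

/-- norm `−1` case. For every nonzero `x = p + qθ ∈ ℤ[θ]`,
`θ⁻¹·|x'| ≤ |x|_θ ≤ θ·|x'|`, where `x' = p + qθ'` is the Galois conjugate. -/
theorem norm_conjugate_comparison_neg_one (a : ℕ) (ha : 1 ≤ a) (p q : ℤ)
    (hne : (p : ℝ) + (q : ℝ) * theta a ≠ 0) :
    (theta a)⁻¹ * |(p : ℝ) + (q : ℝ) * thetaConj a| ≤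
        thNorm a ((p : ℝ) + (q : ℝ) * theta a) ∧
    thNorm a ((p : ℝ) + (q : ℝ) * theta a) ≤
        theta a * |(p : ℝ) + (q : ℝ) * thetaConj a| := by
  have hθ := theta_pos ha
  have h1θ := one_lt_theta ha
  set x := (p : ℝ) + (q : ℝ) * theta a with hxdef
  set x' := (p : ℝ) + (q : ℝ) * thetaConj a with hxdef'
  have hxx : (x, x') ∈ conjPairs a ha := ⟨p, q, rfl, rfl⟩
  set S := {k : ℤ | x / theta a ^ k ∈ Ztheta a} with hS
  have hne' : S.Nonempty := exists_exponent ha hne hxx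
  -- `x' ≠ 0`, and `θ^(-m) ≥ θ⁻¹ |x'|` bounds the exponents from above.
  have hx'pos : 0 < |x'| := by
    obtain ⟨k, hk⟩ := hne'
    obtain ⟨m, -, -, hlow, -⟩ := exists_lowest ha hne hxx hk
    exact lt_of_lt_of_le (mul_pos (zpow_pos hθ _) (inv_pos.2 hθ)) hlow
  have hbdd : BddAbove S := by
    obtain ⟨n, hn⟩ := pow_unbounded_of_one_lt (theta a / |x'|) h1θ
    refine ⟨n, fun k hk => ?_⟩
    obtain ⟨m, hkm, -, -, hup⟩ := exists_lowest ha hne hxx hk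
    refine hkm.trans ?_
    by_contra! hlt
    have h2 : theta a ^ n ≤ theta a ^ m := by
      rw [← zpow_natCast]
      exact zpow_le_zpow_right₀ h1θ.le hlt.le
    rw [zpow_neg, inv_mul_eq_div, le_div_iff₀ (zpow_pos hθ m)] at hup
    rw [div_lt_iff₀ hx'pos] at hn
    nlinarith
  have hmem : vval a x ∈ S := Int.csSup_mem hne' hbdd
  obtain ⟨m, hvm, hm, hlow, hup⟩ := exists_lowest ha hne hxx hmem
  have hmv : m = vval a x := le_antisymm (le_csSup hbdd hm) hvm
  rw [thNorm, if_neg hne, ← hmv]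
  constructor
  · rw [inv_mul_le_iff₀ hθ]
    linarith
  · rw [← div_eq_mul_inv, div_le_iff₀ hθ] at hlow
    linarith
end
end

section
/- Let α ∈ ℤ[θ] with α < 0 and Galois conjugate α'. Then there are exactly two left-finite admissible sequences (b_i)_{i∈ℤ}, each with infinitely many nonzero entries, satisfying Σ_{i∈ℤ} b_i·(−θ⁻¹)^i = α'. (Equivalently: a negative element of ℤ[θ] has exactly two positive greedy Laurent series in its Cauchy class.) -/
/-!
Write `s = θ' = -θ⁻¹` and, for an admissible sequence `b`, let `T n = ∑_{k ≥ 0} b (n + k) s ^ k`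
be its tail at `n`, so that `T n = b n + s * T (n + 1)`.

*At most two sequences.* Tails lie in `[-1, θ]`, and in `[-1, θ - 1]` when the preceding digit is
nonzero (`tail_bounds`). Hence the tails with first digit `d` lie in
`[d - 1 + θ⁻¹, d + θ⁻¹]` for `d ≥ 1` and in `[-1, θ⁻¹]` for `d = 0`: these intervals meet only at
end points. If two sequences with the same sum first differ at `n`, the common tail at `n` is such
an end point, and this forces all digits after `n`: the sequence with the smaller digit continues
as `0 a 0 a …`, the other one as `(a - 1) 0 a 0 a …` (`split_of_lt`). A third sequence cannot
branch off elsewhere without identifying two of the three (`eq_or_eq_of_split`). This part holds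
for every real value of the sum.

*Two sequences exist.* The string `0 a 0 a …` has value `-1`, so it suffices to write
`α = x - θ ^ N` where `x` has a finite admissible expansion using powers below `N`. For large `N`,
`y = 1 + α θ ^ (-N)` lies in `[0, 1)`, and the greedy algorithm `y ↦ θ y - ⌊θ y⌋` produces
admissible digits. It terminates: the conjugate of the remainder is contracted into (nearly) the
interval `[-θ, 1]`, and `0` is the only element of `ℤ[θ]` in the resulting region
(`exists_orb_eq_zero`). Two consecutive values of `N` give sequences whose periodic ends have
different parity.
-/

noncomputable section

/-- A left-finite admissible integer sequence `(b_i)_{i ∈ ℤ}` with infinitely many nonzero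
entries whose series of conjugates `Σ_{i∈ℤ} b_i (−θ⁻¹)^i` sums to the real number `c`. -/
def ConjSeries (a : ℕ) (b : ℤ → ℤ) (c : ℝ) : Prop :=
  (∃ m : ℤ, ∀ i : ℤ, i < m → b i = 0) ∧
  (∀ i : ℤ, 0 ≤ b i ∧ b i ≤ (a : ℤ)) ∧
  (∀ i : ℤ, b i = (a : ℤ) → b (i - 1) = 0) ∧
  (∀ N : ℤ, ∃ i : ℤ, N ≤ i ∧ b i ≠ 0) ∧
  (∑' i : ℤ, (b i : ℝ) * thetaConj a ^ i) = c

lemma theta_mul_conj {a : ℕ} (ha : 1 ≤ a) : theta a * thetaConj a = -1 := by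
  have := one_lt_theta ha
  unfold thetaConj
  field_simp

lemma theta_add_conj {a : ℕ} (ha : 1 ≤ a) : theta a + thetaConj a = a := by
  have h1 := one_lt_theta ha
  have h2 := theta_mul_conj ha
  have h3 := theta_sq a
  have : theta a * (theta a + thetaConj a - a) = 0 := by linear_combination h3 + h2
  rcases mul_eq_zero.1 this with h | h <;> linarith

lemma conj_neg {a : ℕ} (ha : 1 ≤ a) : thetaConj a < 0 := by
  nlinarith [one_lt_theta ha, theta_mul_conj ha]

lemma neg_one_lt_conj {a : ℕ} (ha : 1 ≤ a) : -1 < thetaConj a := by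
  nlinarith [one_lt_theta ha, theta_mul_conj ha]

/-! ### Tails of admissible sequences -/

/-- The part of `ConjSeries` that bounds the digits and excludes a digit `a` after a nonzero one. -/
def Adm (a : ℕ) (b : ℤ → ℤ) : Prop :=
  (∀ i : ℤ, 0 ≤ b i ∧ b i ≤ (a : ℤ)) ∧ (∀ i : ℤ, b i = (a : ℤ) → b (i - 1) = 0)

/-- The tail of the conjugate series from position `n` on, rescaled to start with power `0`. -/
def tail (a : ℕ) (b : ℤ → ℤ) (n : ℤ) : ℝ := ∑' k : ℕ, (b (n + k) : ℝ) * thetaConj a ^ k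

lemma abs_conj_lt {a : ℕ} (ha : 1 ≤ a) : |thetaConj a| < 1 :=
  abs_lt.2 ⟨neg_one_lt_conj ha, (conj_neg ha).trans one_pos⟩

lemma norm_term_le {a : ℕ} {b : ℤ → ℤ} (hb : Adm a b) (n : ℤ) (k : ℕ) :
    ‖(b (n + k) : ℝ) * thetaConj a ^ k‖ ≤ a * |thetaConj a| ^ k := by
  have h0 : (0 : ℝ) ≤ b (n + k) := by exact_mod_cast (hb.1 (n + k)).1
  have h1 : (b (n + k) : ℝ) ≤ a := by exact_mod_cast (hb.1 (n + k)).2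
  rw [norm_mul, norm_pow, Real.norm_eq_abs, Real.norm_eq_abs, abs_of_nonneg h0]
  gcongr

lemma summable_bound {a : ℕ} (ha : 1 ≤ a) :
    Summable fun k : ℕ => (a : ℝ) * |thetaConj a| ^ k :=
  (summable_geometric_of_lt_one (abs_nonneg _) (abs_conj_lt ha)).mul_left _

lemma tail_succ {a : ℕ} (ha : 1 ≤ a) {b : ℤ → ℤ} (hb : Adm a b) (n : ℤ) :
    tail a b n = b n + thetaConj a * tail a b (n + 1) := by
  have hs : Summable fun k : ℕ => (b (n + k) : ℝ) * thetaConj a ^ k :=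
    Summable.of_norm_bounded (summable_bound ha) (norm_term_le hb n)
  unfold tail
  rw [hs.tsum_eq_zero_add, ← tsum_mul_left]
  congr 1
  · simp
  · apply tsum_congr
    intro k
    rw [show n + ((k + 1 : ℕ) : ℤ) = n + 1 + k by push_cast; ring]
    ring

lemma exists_tail_bound {a : ℕ} (ha : 1 ≤ a) {b : ℤ → ℤ} (hb : Adm a b) :
    ∃ C : ℝ, 0 ≤ C ∧ ∀ n, |tail a b n| ≤ C := by
  refine ⟨∑' k : ℕ, (a : ℝ) * |thetaConj a| ^ k, tsum_nonneg fun k => by positivity, fun n => ?_⟩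
  exact tsum_of_norm_bounded (summable_bound ha).hasSum (norm_term_le hb n)

/-- The sum over `ℤ` in terms of a tail, for a sequence vanishing below `m`. -/
lemma tsum_eq_tail {a : ℕ} (ha : 1 ≤ a) {b : ℤ → ℤ} {m : ℤ} (hm : ∀ i < m, b i = 0) :
    ∑' i : ℤ, (b i : ℝ) * thetaConj a ^ i = thetaConj a ^ m * tail a b m := by
  have hinj : Function.Injective (fun k : ℕ => m + (k : ℤ)) := fun x y h => by
    simpa using h
  rw [← hinj.tsum_eq]
  · unfold tail
    rw [← tsum_mul_left]
    apply tsum_congr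
    intro k
    rw [zpow_add₀ (conj_neg ha).ne, zpow_natCast]
    ring
  · intro i hi
    by_contra hcon
    apply hi
    have : i < m := by
      by_contra hlt
      exact hcon ⟨(i - m).toNat, by simp only; omega⟩
    simp [hm i this]

/-- The recursion `tail_succ` contracts, so the bounds hold up to an error `C |θ'| ^ j` for
every `j`. -/
lemma tail_bounds_approx {a : ℕ} (ha : 1 ≤ a) {b : ℤ → ℤ} (hb : Adm a b) {C : ℝ} (hC0 : 0 ≤ C)
    (hC : ∀ n, |tail a b n| ≤ C) (j : ℕ) (n : ℤ) :
    -1 - C * (-thetaConj a) ^ j ≤ tail a b n ∧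
    tail a b n ≤ theta a + C * (-thetaConj a) ^ j ∧
    (b (n - 1) ≠ 0 → tail a b n ≤ theta a - 1 + C * (-thetaConj a) ^ j) := by
  have ht := one_lt_theta ha
  have hs := conj_neg ha
  have hts := theta_mul_conj ha
  have hta := theta_add_conj ha
  induction j generalizing n with
  | zero =>
    have := abs_le.1 (hC n)
    simp only [pow_zero, mul_one]
    exact ⟨by linarith, by linarith, fun _ => by linarith⟩
  | succ j ih =>
    set s := thetaConj a
    set t := theta a
    set e := C * (-s) ^ j with he
    have he' : C * (-s) ^ (j + 1) = -s * e := by rw [he]; ring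
    have he0 : 0 ≤ e := mul_nonneg hC0 (pow_nonneg (by linarith) _)
    rw [he', tail_succ ha hb n]
    obtain ⟨h1, h2, h3⟩ := ih (n + 1)
    have hup : s * tail a b (n + 1) ≤ -s + -s * e := by nlinarith
    have hda : (b n : ℝ) ≤ a := by exact_mod_cast (hb.1 n).2
    refine ⟨?_, by linarith, fun hne => ?_⟩
    · by_cases h0 : b n = 0
      · rw [h0]
        push_cast
        nlinarith
      · have h3' := h3 (by simpa using h0)
        have hd1 : (1 : ℝ) ≤ b n := by
          have := (hb.1 n).1
          exact_mod_cast (by omega : (1 : ℤ) ≤ b n)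
        nlinarith
    · have hd : (b n : ℝ) ≤ a - 1 := by
        have h4 : b n ≠ a := fun h => hne (hb.2 n h)
        have := (hb.1 n).2
        have h5 : b n ≤ (a : ℤ) - 1 := by omega
        exact_mod_cast h5
      linarith

lemma tail_bounds {a : ℕ} (ha : 1 ≤ a) {b : ℤ → ℤ} (hb : Adm a b) (n : ℤ) :
    -1 ≤ tail a b n ∧ tail a b n ≤ theta a ∧
    (b (n - 1) ≠ 0 → tail a b n ≤ theta a - 1) := by
  obtain ⟨C, hC0, hC⟩ := exists_tail_bound ha hb
  have hlim : Filter.Tendsto (fun j : ℕ => C * (-thetaConj a) ^ j) Filter.atTop (nhds 0) := by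
    have := tendsto_pow_atTop_nhds_zero_of_lt_one (r := -thetaConj a)
      (by linarith [conj_neg ha]) (by linarith [neg_one_lt_conj ha])
    simpa using this.const_mul C
  have key := fun j => tail_bounds_approx ha hb hC0 hC j n
  refine ⟨?_, ?_, fun hne => ?_⟩
  · have h := hlim.const_sub (-1)
    rw [sub_zero] at h
    exact le_of_tendsto' h fun j => (key j).1
  · have h := hlim.const_add (theta a)
    rw [add_zero] at h
    exact ge_of_tendsto' h fun j => (key j).2.1
  · have h := hlim.const_add (theta a - 1)
    rw [add_zero] at h
    exact ge_of_tendsto' h fun j => (key j).2.2 hne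

/-- A tail with first digit `d` is at most `d + θ⁻¹`. -/
lemma tail_le_digit {a : ℕ} (ha : 1 ≤ a) {b : ℤ → ℤ} (hb : Adm a b) (n : ℤ) :
    tail a b n ≤ b n - thetaConj a := by
  have := (tail_bounds ha hb (n + 1)).1
  rw [tail_succ ha hb n]
  nlinarith [conj_neg ha]

/-- A tail with first digit `d ≥ 1` is at least `d - 1 + θ⁻¹`. -/
lemma digit_le_tail {a : ℕ} (ha : 1 ≤ a) {b : ℤ → ℤ} (hb : Adm a b) (n : ℤ) (h0 : b n ≠ 0) :
    b n - 1 - thetaConj a ≤ tail a b n := by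
  have := (tail_bounds ha hb (n + 1)).2.2 (by simpa using h0)
  rw [tail_succ ha hb n]
  nlinarith [conj_neg ha, theta_mul_conj ha]

lemma tail_eq_neg_one {a : ℕ} (ha : 1 ≤ a) {b : ℤ → ℤ} (hb : Adm a b) {n : ℤ}
    (h : tail a b n = -1) : b n = 0 ∧ tail a b (n + 1) = theta a := by
  have hs := conj_neg ha
  have h0 : b n = 0 := by
    by_contra h0
    have h1 := digit_le_tail ha hb n h0
    have hd1 : (1 : ℝ) ≤ b n := by
      have := (hb.1 n).1
      exact_mod_cast (by omega : (1 : ℤ) ≤ b n)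
    linarith
  refine ⟨h0, ?_⟩
  have h2 := tail_succ ha hb n
  rw [h, h0] at h2
  push_cast at h2
  linear_combination theta a * h2 + tail a b (n + 1) * theta_mul_conj ha

lemma tail_eq_theta {a : ℕ} (ha : 1 ≤ a) {b : ℤ → ℤ} (hb : Adm a b) {n : ℤ}
    (h : tail a b n = theta a) : b n = a ∧ tail a b (n + 1) = -1 := by
  have hs := conj_neg ha
  have h0 : b n = a := by
    have h1 := tail_le_digit ha hb n
    have h2 : (a : ℝ) ≤ b n := by linarith [theta_add_conj ha]
    exact le_antisymm (hb.1 n).2 (by exact_mod_cast h2)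
  refine ⟨h0, ?_⟩
  have h2 := tail_succ ha hb n
  rw [h, h0] at h2
  push_cast at h2
  have : thetaConj a * (tail a b (n + 1) + 1) = 0 := by
    linear_combination theta_add_conj ha - h2
  rcases mul_eq_zero.1 this with h | h <;> linarith

lemma tail_eq_theta_sub_one {a : ℕ} (ha : 1 ≤ a) {b : ℤ → ℤ} (hb : Adm a b) {n : ℤ}
    (hn : b (n - 1) ≠ 0) (h : tail a b n = theta a - 1) :
    b n = a - 1 ∧ tail a b (n + 1) = -1 := by
  have hs := conj_neg ha
  have h0 : b n = a - 1 := by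
    have h1 := tail_le_digit ha hb n
    have h2 : (a : ℝ) - 1 ≤ b n := by linarith [theta_add_conj ha]
    have h3 : (a : ℤ) - 1 ≤ b n := by exact_mod_cast h2
    have h4 : b n ≠ a := fun h => hn (hb.2 n h)
    have := (hb.1 n).2
    omega
  refine ⟨h0, ?_⟩
  have h2 := tail_succ ha hb n
  rw [h, h0] at h2
  push_cast at h2
  have : thetaConj a * (tail a b (n + 1) + 1) = 0 := by
    linear_combination theta_add_conj ha - h2
  rcases mul_eq_zero.1 this with h | h <;> linarith

/-- The value `-1` determines all later digits: they are `0 a 0 a …`. -/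
lemma eq_of_tail_eq_neg_one {a : ℕ} (ha : 1 ≤ a) {x y : ℤ → ℤ} (hx : Adm a x) (hy : Adm a y)
    {n : ℤ} (h1 : tail a x n = -1) (h2 : tail a y n = -1) : ∀ i, n ≤ i → x i = y i := by
  have key : ∀ k : ℕ, (tail a x (n + k) = -1 ∧ tail a y (n + k) = -1) ∨
      (tail a x (n + k) = theta a ∧ tail a y (n + k) = theta a) := by
    intro k
    induction k with
    | zero => left; simpa using ⟨h1, h2⟩
    | succ k ih =>
      rw [show n + ((k + 1 : ℕ) : ℤ) = n + k + 1 by push_cast; ring]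
      rcases ih with ⟨hl, hr⟩ | ⟨hl, hr⟩
      · exact Or.inr ⟨(tail_eq_neg_one ha hx hl).2, (tail_eq_neg_one ha hy hr).2⟩
      · exact Or.inl ⟨(tail_eq_theta ha hx hl).2, (tail_eq_theta ha hy hr).2⟩
  intro i hi
  obtain ⟨k, rfl⟩ : ∃ k : ℕ, i = n + k := ⟨(i - n).toNat, by omega⟩
  rcases key k with ⟨hl, hr⟩ | ⟨hl, hr⟩
  · rw [(tail_eq_neg_one ha hx hl).1, (tail_eq_neg_one ha hy hr).1]
  · rw [(tail_eq_theta ha hx hl).1, (tail_eq_theta ha hy hr).1]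

/-! ### At most two sequences -/

/-- `x` and `y` agree below `n`, where `y` has the digit of `x` plus one; afterwards `x` continues
with a string of value `-1`, and `y` with `a - 1` and then a string of value `-1`. -/
def Split (a : ℕ) (x y : ℤ → ℤ) (n : ℤ) : Prop :=
  (∀ i < n, x i = y i) ∧ y n = x n + 1 ∧ tail a x (n + 1) = -1 ∧
    y (n + 1) = a - 1 ∧ tail a y (n + 1 + 1) = -1

lemma tail_eq_of_agree {a : ℕ} (ha : 1 ≤ a) {x y : ℤ → ℤ} {c : ℝ} (hx : ConjSeries a x c)
    (hy : ConjSeries a y c) {n : ℤ} (hn : ∀ i < n, x i = y i) : tail a x n = tail a y n := by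
  obtain ⟨⟨m₁, hm₁⟩, hx1, hx2, -, hxc⟩ := hx
  obtain ⟨⟨m₂, hm₂⟩, hy1, hy2, -, hyc⟩ := hy
  have hx : Adm a x := ⟨hx1, hx2⟩
  have hy : Adm a y := ⟨hy1, hy2⟩
  have hs := (conj_neg ha).ne
  set m := min n (min m₁ m₂)
  have h0 : tail a x m = tail a y m := by
    rw [tsum_eq_tail ha (m := m) fun i hi => hm₁ i (by omega)] at hxc
    rw [tsum_eq_tail ha (m := m) fun i hi => hm₂ i (by omega)] at hyc
    exact mul_left_cancel₀ (zpow_ne_zero m hs) (hxc.trans hyc.symm)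
  have key : ∀ k : ℕ, m + k ≤ n → tail a x (m + k) = tail a y (m + k) := by
    intro k
    induction k with
    | zero => intro _; simpa using h0
    | succ k ih =>
      intro hk
      push_cast at hk
      have h1 := ih (by omega)
      rw [tail_succ ha hx, tail_succ ha hy, hn (m + k) (by omega)] at h1
      rw [show m + ((k + 1 : ℕ) : ℤ) = m + k + 1 by push_cast; ring]
      exact mul_left_cancel₀ hs (add_left_cancel h1)
  have := key (n - m).toNat (by omega)
  rwa [show m + ((n - m).toNat : ℤ) = n by omega] at this

lemma ConjSeries.adm {a : ℕ} {x : ℤ → ℤ} {c : ℝ} (hx : ConjSeries a x c) : Adm a x :=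
  ⟨hx.2.1, hx.2.2.1⟩

/-- Two sequences with equal sum can only part at a common end point of adjacent digit
intervals. -/
lemma split_of_lt {a : ℕ} (ha : 1 ≤ a) {x y : ℤ → ℤ} {c : ℝ} (hx : ConjSeries a x c)
    (hy : ConjSeries a y c) {n : ℤ} (hn : ∀ i < n, x i = y i) (hlt : x n < y n) :
    Split a x y n := by
  have heq := tail_eq_of_agree ha hx hy hn
  have hx' := hx.adm
  have hy' := hy.adm
  have hs := conj_neg ha
  have hy0 : y n ≠ 0 := by have := (hx'.1 n).1; omega
  have h1 := tail_le_digit ha hx' n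
  have h2 := digit_le_tail ha hy' n hy0
  have hyx : y n = x n + 1 := by
    have h3 : (y n : ℝ) ≤ x n + 1 := by linarith
    have h4 : y n ≤ x n + 1 := by exact_mod_cast h3
    omega
  have hyxR : (y n : ℝ) = x n + 1 := by exact_mod_cast hyx
  have e1 := tail_succ ha hx' n
  have e2 := tail_succ ha hy' n
  have hx1 : tail a x (n + 1) = -1 := by
    have : thetaConj a * (tail a x (n + 1) + 1) = 0 := by linarith
    rcases mul_eq_zero.1 this with h | h <;> linarith
  have hy1 : tail a y (n + 1) = theta a - 1 := by
    have : thetaConj a * (tail a y (n + 1) - (theta a - 1)) = 0 := by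
      rw [hx1] at e1
      linear_combination e1 - e2 - hyxR - heq - theta_mul_conj ha
    rcases mul_eq_zero.1 this with h | h <;> linarith
  have := tail_eq_theta_sub_one ha hy' (by simpa using hy0) hy1
  exact ⟨hn, hyx, hx1, this.1, this.2⟩

lemma Split.upper_unique {a : ℕ} (ha : 1 ≤ a) {x y z : ℤ → ℤ} (hy : Adm a y) (hz : Adm a z)
    {n : ℤ} (h1 : Split a x y n) (h2 : Split a x z n) : y = z := by
  funext i
  rcases lt_trichotomy i n with h | rfl | h
  · rw [← h1.1 i h, ← h2.1 i h]
  · rw [h1.2.1, h2.2.1]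
  · rcases eq_or_lt_of_le (show n + 1 ≤ i by omega) with rfl | h'
    · rw [h1.2.2.2.1, h2.2.2.2.1]
    · exact eq_of_tail_eq_neg_one ha hy hz h1.2.2.2.2 h2.2.2.2.2 i (by omega)

lemma Split.lower_unique {a : ℕ} (ha : 1 ≤ a) {x y z : ℤ → ℤ} (hx : Adm a x) (hz : Adm a z)
    {n : ℤ} (h1 : Split a x y n) (h2 : Split a z y n) : x = z := by
  funext i
  rcases lt_trichotomy i n with h | rfl | h
  · rw [h1.1 i h, h2.1 i h]
  · have e1 := h1.2.1
    have e2 := h2.2.1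
    omega
  · exact eq_of_tail_eq_neg_one ha hx hz h1.2.2.1 h2.2.2.1 i (by omega)

lemma exists_first_diff {a : ℕ} {x y : ℤ → ℤ} {c : ℝ} (hx : ConjSeries a x c)
    (hy : ConjSeries a y c) (hne : x ≠ y) : ∃ n, (∀ i < n, x i = y i) ∧ x n ≠ y n := by
  obtain ⟨m₁, hm₁⟩ := hx.1
  obtain ⟨m₂, hm₂⟩ := hy.1
  obtain ⟨n, hn, hmin⟩ := Int.exists_least_of_bdd (P := fun i => x i ≠ y i)
    ⟨min m₁ m₂, fun i hi => by
      by_contra hlt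
      exact hi (by rw [hm₁ i (by omega), hm₂ i (by omega)])⟩
    (Function.ne_iff.1 hne)
  refine ⟨n, fun i hi => ?_, hn⟩
  by_contra h
  have := hmin i h
  omega

lemma eq_or_eq_of_split {a : ℕ} (ha : 1 ≤ a) {x y z : ℤ → ℤ} {c : ℝ} (hx : ConjSeries a x c)
    (hy : ConjSeries a y c) (hz : ConjSeries a z c) {n : ℤ} (h : Split a x y n) :
    z = x ∨ z = y := by
  have hxy : x ≠ y := fun e => by have := h.2.1; rw [e] at this; omega
  by_cases hagree : ∀ i < n, z i = x i
  · have hagree' : ∀ i < n, z i = y i := fun i hi => (hagree i hi).trans (h.1 i hi)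
    have hyn := h.2.1
    rcases lt_trichotomy (z n) (x n) with hl | he | hg
    · exact absurd (Split.upper_unique ha hx.adm hy.adm (split_of_lt ha hz hx hagree hl)
        (split_of_lt ha hz hy hagree' (by omega))) hxy
    · exact Or.inl (Split.lower_unique ha hz.adm hx.adm
        (split_of_lt ha hz hy hagree' (by omega)) h)
    · exact Or.inr (Split.upper_unique ha hz.adm hy.adm
        (split_of_lt ha hx hz (fun i hi => (hagree i hi).symm) hg) h)
  · push Not at hagree
    obtain ⟨i, hin, hi⟩ := hagree
    obtain ⟨k, hk, hkne⟩ := exists_first_diff hz hx fun e => hi (by rw [e])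
    have hki : k ≤ i := by
      by_contra hlt
      exact hi (hk i (by omega))
    have hk' : ∀ j < k, z j = y j := fun j hj => (hk j hj).trans (h.1 j (by omega))
    have hxyk := h.1 k (by omega)
    exfalso
    apply hxy
    rcases lt_or_gt_of_ne hkne with hl | hg
    · exact Split.upper_unique ha hx.adm hy.adm (split_of_lt ha hz hx hk hl)
        (split_of_lt ha hz hy hk' (by omega))
    · exact Split.lower_unique ha hx.adm hy.adm
        (split_of_lt ha hx hz (fun j hj => (hk j hj).symm) hg)
        (split_of_lt ha hy hz (fun j hj => (hk' j hj).symm) (by omega))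

lemma eq_or_eq {a : ℕ} (ha : 1 ≤ a) {x y z : ℤ → ℤ} {c : ℝ} (hx : ConjSeries a x c)
    (hy : ConjSeries a y c) (hz : ConjSeries a z c) (hne : x ≠ y) : z = x ∨ z = y := by
  obtain ⟨n, hn, hn'⟩ := exists_first_diff hx hy hne
  rcases lt_or_gt_of_ne hn' with h | h
  · exact eq_or_eq_of_split ha hx hy hz (split_of_lt ha hx hy hn h)
  · exact (eq_or_eq_of_split ha hy hx hz
      (split_of_lt ha hy hx (fun i hi => (hn i hi).symm) h)).symm

/-! ### The greedy algorithm terminates on `ℤ[θ] ∩ [0, 1)` -/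

/-- The greedy digit `⌊θ y⌋` of `y = u + v θ`, encoded as the pair `(u, v)`. -/
def dig (a : ℕ) (w : ℤ × ℤ) : ℤ := ⌊theta a * ((w.1 : ℝ) + w.2 * theta a)⌋

/-- Coordinates of the greedy remainders: `orb a w n` encodes the `n`-th iterate of
`y ↦ θ y - ⌊θ y⌋` at `y = w.1 + w.2 θ`. -/
def orb (a : ℕ) (w : ℤ × ℤ) : ℕ → ℤ × ℤ
  | 0 => w
  | n + 1 => ((orb a w n).2 - dig a (orb a w n), (orb a w n).1 + a * (orb a w n).2)

/-- The real number `u + v θ`. -/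
def val (a : ℕ) (w : ℤ × ℤ) : ℝ := (w.1 : ℝ) + w.2 * theta a

/-- The conjugate `u + v θ'`. -/
def cval (a : ℕ) (w : ℤ × ℤ) : ℝ := (w.1 : ℝ) + w.2 * thetaConj a

lemma val_orb_succ (a : ℕ) (w : ℤ × ℤ) (n : ℕ) :
    val a (orb a w (n + 1)) = theta a * val a (orb a w n) - dig a (orb a w n) := by
  simp only [val, orb]
  push_cast
  linear_combination (-((orb a w n).2 : ℝ)) * theta_sq a

lemma cval_orb_succ {a : ℕ} (ha : 1 ≤ a) (w : ℤ × ℤ) (n : ℕ) :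
    cval a (orb a w (n + 1)) = thetaConj a * cval a (orb a w n) - dig a (orb a w n) := by
  simp only [cval, orb]
  push_cast
  linear_combination (-((orb a w n).2 : ℝ)) * thetaConj a * theta_add_conj ha
    + ((orb a w n).2 : ℝ) * theta_mul_conj ha

lemma val_orb_mem {a : ℕ} {w : ℤ × ℤ} (h0 : 0 ≤ val a w) (h1 : val a w < 1) (n : ℕ) :
    0 ≤ val a (orb a w n) ∧ val a (orb a w n) < 1 := by
  cases n with
  | zero => exact ⟨h0, h1⟩
  | succ n =>
    rw [val_orb_succ]
    exact ⟨Int.fract_nonneg _, Int.fract_lt_one _⟩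

lemma dig_bounds {a : ℕ} (ha : 1 ≤ a) {w : ℤ × ℤ} (h0 : 0 ≤ val a w) (h1 : val a w < 1) :
    0 ≤ dig a w ∧ dig a w ≤ a := by
  have ht := one_lt_theta ha
  refine ⟨Int.floor_nonneg.2 (mul_nonneg (by linarith) h0), ?_⟩
  have : dig a w < (a : ℤ) + 1 := by
    apply Int.floor_lt.2
    push_cast
    change theta a * val a w < a + 1
    nlinarith [theta_add_conj ha, neg_one_lt_conj ha]
  omega

/-- After a digit `a` the remainder is less than `θ⁻¹`. -/
lemma val_lt_of_dig_eq {a : ℕ} (ha : 1 ≤ a) {w : ℤ × ℤ} (h0 : 0 ≤ val a w) (h1 : val a w < 1)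
    (n : ℕ) (hd : dig a (orb a w n) = a) : val a (orb a w (n + 1)) < -thetaConj a := by
  rw [val_orb_succ, hd]
  have := (val_orb_mem h0 h1 n).2
  push_cast
  nlinarith [theta_add_conj ha, one_lt_theta ha]

lemma dig_succ_eq_zero {a : ℕ} (ha : 1 ≤ a) {w : ℤ × ℤ} (h0 : 0 ≤ val a w) (h1 : val a w < 1)
    (n : ℕ) (hd : dig a (orb a w n) = a) : dig a (orb a w (n + 1)) = 0 := by
  have hlt := val_lt_of_dig_eq ha h0 h1 n hd
  have hnn := (val_orb_mem h0 h1 (n + 1)).1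
  have ht := one_lt_theta ha
  apply Int.floor_eq_zero_iff.2
  change 0 ≤ theta a * val a _ ∧ theta a * val a _ < 1
  exact ⟨mul_nonneg (by linarith) hnn, by nlinarith [theta_mul_conj ha]⟩

/-- The conjugate of the `n`-th remainder is at distance `O(|θ'| ^ n)` from `[-θ, 1]`, and even
from `[-(θ - 1), 1]` when the remainder is at least `θ⁻¹`, since then the preceding digit is
not `a`. -/
lemma cval_orb_bounds {a : ℕ} (ha : 1 ≤ a) {w : ℤ × ℤ} (h0 : 0 ≤ val a w) (h1 : val a w < 1)
    (n : ℕ) :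
    cval a (orb a w n) ≤ 1 + |cval a w| * (-thetaConj a) ^ n ∧
    -theta a - |cval a w| * (-thetaConj a) ^ n ≤ cval a (orb a w n) ∧
    (-thetaConj a ≤ val a (orb a w n) →
      -(theta a - 1) - |cval a w| * (-thetaConj a) ^ n ≤ cval a (orb a w n)) := by
  have ht := one_lt_theta ha
  have hs := conj_neg ha
  have hts := theta_mul_conj ha
  have hta := theta_add_conj ha
  induction n with
  | zero =>
    simp only [pow_zero, mul_one, orb]
    have h2 := le_abs_self (cval a w)
    have h3 := neg_abs_le (cval a w)
    exact ⟨by linarith, by linarith, fun _ => by linarith⟩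
  | succ n ih =>
    obtain ⟨i1, i2, -⟩ := ih
    obtain ⟨m0, m1⟩ := val_orb_mem h0 h1 n
    obtain ⟨d0, d1⟩ := dig_bounds ha m0 m1
    have d0' : (0 : ℝ) ≤ dig a (orb a w n) := by exact_mod_cast d0
    have d1' : (dig a (orb a w n) : ℝ) ≤ a := by exact_mod_cast d1
    rw [cval_orb_succ ha, pow_succ]
    set e := |cval a w| * (-thetaConj a) ^ n with he
    rw [← mul_assoc, ← he]
    have lo : thetaConj a + thetaConj a * e ≤ thetaConj a * cval a (orb a w n) := by nlinarith
    have up : thetaConj a * cval a (orb a w n) ≤ 1 - thetaConj a * e := by nlinarith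
    refine ⟨by linarith, by linarith, fun hge => ?_⟩
    have hne : dig a (orb a w n) ≠ a := fun h => by
      have := val_lt_of_dig_eq ha h0 h1 n h
      linarith
    have d2 : (dig a (orb a w n) : ℝ) ≤ a - 1 := by
      have h5 : dig a (orb a w n) ≤ (a : ℤ) - 1 := by omega
      exact_mod_cast h5
    linarith

lemma exists_orb_eq_zero {a : ℕ} (ha : 1 ≤ a) {w : ℤ × ℤ} (h0 : 0 ≤ val a w)
    (h1 : val a w < 1) : ∃ J, orb a w J = (0, 0) := by
  have ht := one_lt_theta ha
  have hs := conj_neg ha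
  have hs1 := neg_one_lt_conj ha
  have hta := theta_add_conj ha
  have hlim : Filter.Tendsto (fun j : ℕ => |cval a w| * (-thetaConj a) ^ j) Filter.atTop
      (nhds 0) := by
    have := tendsto_pow_atTop_nhds_zero_of_lt_one (r := -thetaConj a)
      (by linarith) (by linarith)
    simpa using this.const_mul |cval a w|
  obtain ⟨J, hJ⟩ := (hlim.eventually_lt_const (show 0 < -thetaConj a by linarith)).exists
  refine ⟨J, ?_⟩
  obtain ⟨b1, b2, b3⟩ := cval_orb_bounds ha h0 h1 J
  obtain ⟨m0, m1⟩ := val_orb_mem h0 h1 J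
  set e := |cval a w| * (-thetaConj a) ^ J
  generalize orb a w J = z at *
  obtain ⟨u, v⟩ := z
  -- `val - cval = v (θ - θ')`, so the bounds leave only `v = 0` and `v = 1`.
  have hdiff : val a (u, v) - cval a (u, v) = v * (theta a - thetaConj a) := by
    simp only [val, cval]; ring
  have hpos : 0 < theta a - thetaConj a := by linarith
  have hv2 : v < 2 := by
    by_contra h
    have : (2 : ℝ) ≤ v := by exact_mod_cast not_lt.1 h
    by_cases hge : -thetaConj a ≤ val a (u, v)
    · nlinarith [b3 hge]
    · nlinarith
  have hv0 : -1 < v := by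
    by_contra h
    have : (v : ℝ) ≤ -1 := by exact_mod_cast not_lt.1 h
    nlinarith
  obtain rfl | rfl : v = 0 ∨ v = 1 := by omega
  · simp only [val, Int.cast_zero, zero_mul, add_zero] at m0 m1
    have e0 : 0 ≤ u := by exact_mod_cast m0
    have e1 : u < 1 := by exact_mod_cast m1
    obtain rfl : u = 0 := by omega
    rfl
  · exfalso
    push_cast at hdiff
    have hlt : val a (u, 1) < -thetaConj a := by
      by_contra hge
      linarith [b3 (not_lt.1 hge)]
    simp only [val, Int.cast_one, one_mul] at m0 hlt
    have hu : (u : ℝ) + a < 0 := by linarith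
    have hu' : u + a < 0 := by exact_mod_cast hu
    have hu2 : (u : ℝ) + a ≤ -1 := by exact_mod_cast (by omega : u + (a : ℤ) ≤ -1)
    linarith

/-! ### Existence -/

/-- The greedy digits of `w` written downwards from position `N - 1`, and `0 a 0 a …` from
position `N` upwards. -/
def series (a : ℕ) (w : ℤ × ℤ) (N : ℤ) (i : ℤ) : ℤ :=
  if i < N then dig a (orb a w (N - 1 - i).toNat) else if (i - N) % 2 = 0 then 0 else a

lemma series_adm {a : ℕ} (ha : 1 ≤ a) {w : ℤ × ℤ} (h0 : 0 ≤ val a w) (h1 : val a w < 1)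
    (N : ℤ) : Adm a (series a w N) := by
  refine ⟨fun i => ?_, fun i hi => ?_⟩
  · unfold series
    split_ifs
    · obtain ⟨m0, m1⟩ := val_orb_mem h0 h1 (N - 1 - i).toNat
      exact dig_bounds ha m0 m1
    · omega
    · omega
  · unfold series at hi ⊢
    split_ifs at hi with c1 c2
    · rw [if_pos (by omega), show (N - 1 - (i - 1)).toNat = (N - 1 - i).toNat + 1 by omega]
      exact dig_succ_eq_zero ha h0 h1 _ hi
    · omega
    · rw [if_neg (by omega), if_pos (by omega)]

lemma series_tail {a : ℕ} (ha : 1 ≤ a) {w : ℤ × ℤ} (h0 : 0 ≤ val a w) (h1 : val a w < 1)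
    (N : ℤ) : tail a (series a w N) N = -1 := by
  have hb := series_adm ha h0 h1 N
  have hper : tail a (series a w N) (N + 1 + 1) = tail a (series a w N) N := by
    unfold tail
    apply tsum_congr
    intro k
    congr 2
    unfold series
    rw [if_neg (show ¬ N + 1 + 1 + (k : ℤ) < N by omega), if_neg (show ¬ N + (k : ℤ) < N by omega)]
    split_ifs <;> omega
  have e1 := tail_succ ha hb N
  have e2 := tail_succ ha hb (N + 1)
  rw [hper] at e2
  have v1 : series a w N N = 0 := by simp [series]
  have v2 : series a w N (N + 1) = a := by simp [series]
  rw [v1] at e1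
  rw [v2] at e2
  push_cast at e1 e2
  have hs := conj_neg ha
  have ha' : (1 : ℝ) ≤ a := by exact_mod_cast ha
  have : (a : ℝ) * (thetaConj a * (tail a (series a w N) N + 1)) = 0 := by
    linear_combination (-1 : ℝ) * e1 - thetaConj a * e2
      - thetaConj a * tail a (series a w N) N * theta_add_conj ha
      + tail a (series a w N) N * theta_mul_conj ha
  rcases mul_eq_zero.1 this with h | h
  · linarith
  · rcases mul_eq_zero.1 h with h | h <;> linarith

lemma series_conj {a : ℕ} (ha : 1 ≤ a) {w : ℤ × ℤ} (h0 : 0 ≤ val a w) (h1 : val a w < 1)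
    (N : ℤ) : ConjSeries a (series a w N) (thetaConj a ^ N * (cval a w - 1)) := by
  have hb := series_adm ha h0 h1 N
  have hs := (conj_neg ha).ne
  obtain ⟨J, hJ⟩ := exists_orb_eq_zero ha h0 h1
  have hzero : ∀ k, orb a w (J + k) = (0, 0) := by
    intro k
    induction k with
    | zero => exact hJ
    | succ k ih =>
      rw [← add_assoc, orb, ih]
      simp [dig]
  have hleft : ∀ i < N - J, series a w N i = 0 := by
    intro i hi
    unfold series
    rw [if_pos (by omega), show (N - 1 - i).toNat = J + ((N - 1 - i).toNat - J) by omega, hzero]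
    simp [dig]
  refine ⟨⟨N - J, hleft⟩, hb.1, hb.2, fun M => ?_, ?_⟩
  · refine ⟨N + 1 + 2 * |M - N|, ?_, ?_⟩
    · have := le_abs_self (M - N)
      have := abs_nonneg (M - N)
      omega
    · have := abs_nonneg (M - N)
      unfold series
      rw [if_neg (by omega), if_neg (by omega)]
      omega
  · rw [tsum_eq_tail ha hleft]
    have key : ∀ n : ℕ, thetaConj a ^ (N - n) * tail a (series a w N) (N - n) =
        thetaConj a ^ N * (cval a w - 1) - thetaConj a ^ (N - n) * cval a (orb a w n) := by
      intro n
      induction n with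
      | zero =>
        simp only [Nat.cast_zero, sub_zero, series_tail ha h0 h1, orb]
        ring
      | succ n ih =>
        have e : N - (n : ℤ) = N - ((n + 1 : ℕ) : ℤ) + 1 := by push_cast; ring
        have hd : series a w N (N - ((n + 1 : ℕ) : ℤ)) = dig a (orb a w n) := by
          unfold series
          rw [if_pos (by omega)]
          congr 2
          omega
        rw [e, zpow_add_one₀ hs] at ih
        rw [tail_succ ha hb, hd, cval_orb_succ ha]
        linear_combination ih
    rw [key J, hJ]
    simp [cval]

/-- `ℤ[θ]` is stable under division by `θ`, compatibly with conjugation. -/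
lemma exists_div_pow {a : ℕ} (ha : 1 ≤ a) (p q : ℤ) (N : ℕ) : ∃ w : ℤ × ℤ,
    val a (p, q) = theta a ^ N * val a w ∧ cval a (p, q) = thetaConj a ^ N * cval a w := by
  induction N with
  | zero => exact ⟨(p, q), by simp, by simp⟩
  | succ N ih =>
    obtain ⟨⟨u, v⟩, h1, h2⟩ := ih
    refine ⟨(v - a * u, u), ?_, ?_⟩
    · rw [h1, pow_succ, mul_assoc]
      congr 1
      simp only [val]
      push_cast
      linear_combination (-(u : ℝ)) * theta_sq a
    · rw [h2, pow_succ, mul_assoc]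
      congr 1
      simp only [cval]
      push_cast
      linear_combination (-(u : ℝ)) * thetaConj a * theta_add_conj ha + (u : ℝ) * theta_mul_conj ha

/-- A large enough `N` gives a sequence for `α = p + q θ < 0` with periodic end starting
at `N`. -/
lemma exists_series {a : ℕ} (ha : 1 ≤ a) (p q : ℤ) (hneg : val a (p, q) < 0) {N : ℕ}
    (hN : -val a (p, q) < theta a ^ N) :
    ∃ w : ℤ × ℤ, ConjSeries a (series a w N) (cval a (p, q)) := by
  obtain ⟨⟨u, v⟩, h1, h2⟩ := exists_div_pow ha p q N
  have hpos : 0 < theta a ^ N := pow_pos (by linarith [one_lt_theta ha]) N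
  have e1 : val a (u + 1, v) = val a (u, v) + 1 := by simp only [val]; push_cast; ring
  have e2 : cval a (u + 1, v) = cval a (u, v) + 1 := by simp only [cval]; push_cast; ring
  refine ⟨(u + 1, v), ?_⟩
  have := series_conj ha (w := (u + 1, v)) (by rw [e1]; nlinarith) (by rw [e1]; nlinarith) N
  rw [e2] at this
  simpa [h2] using this

/-- Let `α = p + qθ ∈ ℤ[θ]` with `α < 0`. Then there are exactly two
left-finite admissible sequences `(b_i)`, each with infinitely many nonzero entries, such that
`Σ_{i∈ℤ} b_i (−θ⁻¹)^i = α'`; i.e. a negative element of `ℤ[θ]` has exactly two positive greedy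
Laurent series in its Cauchy class. -/
theorem negative_exactly_two_laurent (a : ℕ) (ha : 1 ≤ a) (p q : ℤ)
    (hneg : (p : ℝ) + (q : ℝ) * theta a < 0) :
    ∃ b₁ b₂ : ℤ → ℤ, b₁ ≠ b₂ ∧
      ConjSeries a b₁ ((p : ℝ) + (q : ℝ) * thetaConj a) ∧
      ConjSeries a b₂ ((p : ℝ) + (q : ℝ) * thetaConj a) ∧
      ∀ b : ℤ → ℤ, ConjSeries a b ((p : ℝ) + (q : ℝ) * thetaConj a) → b = b₁ ∨ b = b₂ := by
  have ht := one_lt_theta ha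
  obtain ⟨N, hN⟩ := pow_unbounded_of_one_lt (-val a (p, q)) ht
  have hN' : -val a (p, q) < theta a ^ (N + 1) :=
    hN.trans (pow_lt_pow_right₀ ht (Nat.lt_succ_self N))
  obtain ⟨w₁, h₁⟩ := exists_series ha p q hneg hN
  obtain ⟨w₂, h₂⟩ := exists_series ha p q hneg hN'
  have hne : series a w₁ N ≠ series a w₂ ((N + 1 : ℕ) : ℤ) := by
    -- At position `N + 2` the first sequence has digit `0` and the second has digit `a`.
    intro h
    have h3 := congrFun h (N + 2)
    unfold series at h3
    rw [if_neg (by omega), if_pos (by omega), if_neg (by omega), if_neg (by omega)] at h3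
    omega
  exact ⟨_, _, hne, h₁, h₂, fun b hb => eq_or_eq ha h₁ h₂ hb hne⟩
end
end
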